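/- Let k ≥ l ≥ m ≥ 1 be integers with l ≥ 2, and suppose m < √(k+l). Then for the parameters a₁ = k/(2(k+l+m−2)), a₂ = l/(2(k+l+m−2)), a₃ = m/(2(k+l+m−2)), the set of Einstein solutions (x₁,x₂,x₃) normalized by x₁+x₂+x₃ = 1 has exactly 2 elements; i.e., the generalized Wallach space SO(k+l+m)/SO(k)×SO(l)×SO(m) admits exactly 2 invariant Einstein metrics up to homothety. -/

import Mathlib

/-!
Write `p = k + l`, `q = k - l`, `N = p + m - 2`. The two Einstein equations are invertible linear
combinations of `R₁ = R₂ = R₃`, where `R₁ = 2N x₂x₃ + k (x₁² - x₂² - x₃²)` and cyclically.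
In the coordinates `v = (x₁ + x₂)/x₃ = 1 + δ`, `u = (x₁ - x₂)/x₃` this system becomes
`u (p v - 2N) = q` and `u² D(δ) = A(δ)` with two quadratics `A`, `D` in `δ` that depend only on `p`
and `m` (`numA` and `denD`). Since `m² < p`, both are positive everywhere, so `u = ±√(A/D)`, and
with `g(δ) = (p v - 2N) √(A/D)` the equations read `g(δ) = ±q`. Moreover
`v² D - A = (v² - 1)(p v² - 2N v + p + 2m)` with a positive second factor, so `x₁, x₂ > 0` means
`δ > 0`.

The heart of the proof is that `g` is strictly increasing on `δ ≥ 0`. The numerator of `g'` is a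
quartic in `δ` whose positivity (`derivative_pos`) follows from `m² < p`; half of it is, to
leading order in the regime `m ~ √p`, `δ ~ 1/√p`, equal to
`p (p δ² - 2mδ)² + 2 (p δ - 2m)² + 8 (p - m²)`, so that `m < √(k+l)` is asymptotically the exact
threshold for this monotonicity. As `g(0) = -(p + 2m - 4) < -q` and `g` is unbounded above, each of
`g(δ) = q` and `g(δ) = -q` has exactly one solution `δ > 0`, with `u > 0` and `u < 0` respectively.
-/

noncomputable section

/-- The pair of Einstein equations together with positivity of the metric components. -/
def isEinstein (a₁ a₂ a₃ x₁ x₂ x₃ : ℝ) : Prop :=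
  0 < x₁ ∧ 0 < x₂ ∧ 0 < x₃ ∧
  (a₂ + a₃) * (a₁ * x₂ ^ 2 + a₁ * x₃ ^ 2 - x₂ * x₃) + (a₂ * x₂ + a₃ * x₃) * x₁
    - (a₁ * a₂ + a₁ * a₃ + 2 * a₂ * a₃) * x₁ ^ 2 = 0 ∧
  (a₁ + a₃) * (a₂ * x₁ ^ 2 + a₂ * x₃ ^ 2 - x₁ * x₃) + (a₁ * x₁ + a₃ * x₃) * x₂
    - (a₁ * a₂ + 2 * a₁ * a₃ + a₂ * a₃) * x₂ ^ 2 = 0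

/-- Einstein solutions normalized by `x₁ + x₂ + x₃ = 1`. -/
def normalizedEinstein (a₁ a₂ a₃ : ℝ) : Set (ℝ × ℝ × ℝ) :=
  {x | isEinstein a₁ a₂ a₃ x.1 x.2.1 x.2.2 ∧ x.1 + x.2.1 + x.2.2 = 1}

/-- With `δ = (x₁ + x₂)/x₃ - 1`, the numerator of `((x₁ - x₂)/x₃)²` for an Einstein metric. -/
def numA (p m δ : ℝ) : ℝ := (p - 2) * δ ^ 2 - 2 * m * δ + 2

/-- With `δ = (x₁ + x₂)/x₃ - 1`, the denominator of `((x₁ - x₂)/x₃)²` for an Einstein metric. -/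
def denD (p m δ : ℝ) : ℝ := p * δ ^ 2 - 2 * (m - 2) * δ + 2

/-- The function `g` whose level sets at heights `±(k - l)` are the Einstein metrics. -/
def gfun (p m δ : ℝ) : ℝ := (p * δ - (p + 2 * m - 4)) * √(numA p m δ / denD p m δ)

lemma numA_pos {p m : ℝ} (hp : 4 ≤ p) (hmp : m ^ 2 + 1 ≤ p) (δ : ℝ) : 0 < numA p m δ := by
  have h : 0 < (p - 2) * numA p m δ := by
    unfold numA
    nlinarith [sq_nonneg ((p - 2) * δ - m)]
  exact pos_of_mul_pos_right h (by linarith)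

lemma denD_pos {p m : ℝ} (hp : 4 ≤ p) (hm : 1 ≤ m) (hmp : m ^ 2 + 1 ≤ p) (δ : ℝ) :
    0 < denD p m δ := by
  have h : 0 < p * denD p m δ := by
    unfold denD
    nlinarith [sq_nonneg (p * δ - (m - 2))]
  exact pos_of_mul_pos_right h (by linarith)

/-- Half of the numerator of `g'` is positive. The integrality of `m` only serves to isolate the
small cases `m = 1, 2`. -/
lemma derivative_pos {p m δ : ℝ} (hp : 4 ≤ p) (hm : m = 1 ∨ m = 2 ∨ 3 ≤ m)
    (hmp : m ^ 2 + 1 ≤ p) (hδ : 0 < δ) :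
    0 < p * (numA p m δ * denD p m δ) +
      2 * (p * δ - (p + 2 * m - 4)) * ((p + m - 2) * δ ^ 2 - 2 * δ - 2) := by
  unfold numA denD
  rcases hm with rfl | rfl | hm
  · have h : 0 < p ^ 2 * (p - 2) * δ ^ 4 + p * (2 * p - 6) * δ ^ 3
        + ((2 * p ^ 2 - 6 * p - 8) * δ ^ 2 + (4 * δ ^ 2 - 8 * δ + 4) + (8 * p - 12)) := by
      have h1 : 0 < p ^ 2 * (p - 2) * δ ^ 4 := by
        have : 0 < p - 2 := by linarith
        positivity
      have h2 : 0 < p * (2 * p - 6) * δ ^ 3 := by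
        have : 0 < 2 * p - 6 := by linarith
        positivity
      have h3 : 0 ≤ (2 * p ^ 2 - 6 * p - 8) * δ ^ 2 :=
        mul_nonneg (by nlinarith) (by positivity)
      nlinarith [sq_nonneg (δ - 1)]
    linarith
  · have hp5 : 5 ≤ p := by linarith
    have h : 0 < p * (p * (p - 2) * δ ^ 4 - 2 * p * δ ^ 3 + (2 * p - 8) * δ ^ 2 - 8 * δ + 8) := by
      apply mul_pos (by linarith)
      have h5 : 0 < 15 * δ ^ 4 - 10 * δ ^ 3 + 2 * δ ^ 2 - 8 * δ + 8 := by
        nlinarith [sq_nonneg (δ ^ 2 - δ / 3 - 2/5), sq_nonneg (δ - 4/5), sq_nonneg (δ ^ 2 - 16/25)]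
      -- the quartic increases with `p`, so `p = 5` is the worst case
      have hinc : 0 ≤ (p - 5) * δ ^ 2 * ((p + 3) * δ ^ 2 - 2 * δ + 2) := by
        apply mul_nonneg (mul_nonneg (by linarith) (by positivity))
        nlinarith [sq_nonneg (δ - 1), mul_nonneg (by linarith : 0 ≤ p + 2) (sq_nonneg δ)]
      nlinarith
    linarith
  · have hT : 0 ≤ p * (6 * p - 2 * m - 12) * δ ^ 2
        - (14 * p * m - 4 * p + 4 * (m - 2) ^ 2 - 8 * m ^ 2) * δ + 8 * (p + m - 2) + p := by
      have hc : 0 < 6 * p - 2 * m - 12 := by nlinarith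
      have h1 : 0 ≤ (6 * p - 2 * m - 12) * δ ^ 2 - (14 * m - 4) * δ + 9 := by
        have : 0 ≤ (6 * p - 2 * m - 12) *
            ((6 * p - 2 * m - 12) * δ ^ 2 - (14 * m - 4) * δ + 9) := by
          nlinarith [sq_nonneg ((6 * p - 2 * m - 12) * δ - (7 * m - 2))]
        exact nonneg_of_mul_nonneg_right this hc
      have h2 : 0 ≤ (8 * m ^ 2 - 4 * (m - 2) ^ 2) * δ := mul_nonneg (by nlinarith) hδ.le
      have h3 := mul_nonneg (by linarith : 0 ≤ p) h1
      nlinarith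
    have h1 := mul_nonneg hδ.le hT
    have h2 := mul_nonneg (by linarith : 0 ≤ p - 2) (sq_nonneg (p * δ ^ 2 - 2 * m * δ))
    have h3 := sq_nonneg (p * δ - 2 * m - 1 / 4)
    nlinarith

lemma gfun_continuous {p m : ℝ} (hp : 4 ≤ p) (hm : 1 ≤ m) (hmp : m ^ 2 + 1 ≤ p) :
    Continuous (gfun p m) := by
  have hA : Continuous (numA p m) := by unfold numA; fun_prop
  have hD : Continuous (denD p m) := by unfold denD; fun_prop
  have hR : Continuous fun δ => numA p m δ / denD p m δ :=
    hA.div hD fun δ => (denD_pos hp hm hmp δ).ne'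
  unfold gfun
  exact (by fun_prop : Continuous fun δ : ℝ => p * δ - (p + 2 * m - 4)).mul hR.sqrt

lemma gfun_strictMonoOn {p m : ℝ} (hp : 4 ≤ p) (hm : m = 1 ∨ m = 2 ∨ 3 ≤ m)
    (hmp : m ^ 2 + 1 ≤ p) : StrictMonoOn (gfun p m) (Set.Ici 0) := by
  have hm1 : 1 ≤ m := by rcases hm with h | h | h <;> linarith
  apply strictMonoOn_of_deriv_pos (convex_Ici 0) (gfun_continuous hp hm1 hmp).continuousOn
  intro δ hδ
  rw [interior_Ici, Set.mem_Ioi] at hδ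
  have hA := numA_pos hp hmp δ
  have hD := denD_pos hp hm1 hmp δ
  have hR : 0 < numA p m δ / denD p m δ := div_pos hA hD
  have dA : HasDerivAt (numA p m) ((p - 2) * (2 * δ) - 2 * m) δ := by
    unfold numA
    have := (((hasDerivAt_pow 2 δ).const_mul (p - 2)).sub
      ((hasDerivAt_id δ).const_mul (2 * m))).add_const 2
    simpa using this
  have dD : HasDerivAt (denD p m) (p * (2 * δ) - 2 * (m - 2)) δ := by
    unfold denD
    have := (((hasDerivAt_pow 2 δ).const_mul p).sub
      ((hasDerivAt_id δ).const_mul (2 * (m - 2)))).add_const 2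
    simpa using this
  have dL : HasDerivAt (fun δ : ℝ => p * δ - (p + 2 * m - 4)) p δ := by
    simpa using ((hasDerivAt_id δ).const_mul p).sub_const (p + 2 * m - 4)
  have dg : HasDerivAt (gfun p m) _ δ := dL.mul ((dA.div dD hD.ne').sqrt hR.ne')
  rw [dg.deriv]
  have hs := Real.sqrt_pos.2 hR
  have hsq : √(numA p m δ / denD p m δ) ^ 2 = numA p m δ / denD p m δ := Real.sq_sqrt hR.le
  have hQ := derivative_pos hp hm hmp hδ
  -- the Wronskian `A' D - A D'` collapses to a single quadratic
  have hW : ((p - 2) * (2 * δ) - 2 * m) * denD p m δ - numA p m δ * (p * (2 * δ) - 2 * (m - 2))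
      = 4 * ((p + m - 2) * δ ^ 2 - 2 * δ - 2) := by
    unfold numA denD; ring
  have key : 0 < (p * (numA p m δ * denD p m δ) +
      2 * (p * δ - (p + 2 * m - 4)) * ((p + m - 2) * δ ^ 2 - 2 * δ - 2)) /
      (denD p m δ ^ 2 * √(numA p m δ / denD p m δ)) := div_pos hQ (by positivity)
  convert key using 1
  simp only [Pi.div_apply, hW]
  generalize √(numA p m δ / denD p m δ) = S at *
  have hA' : numA p m δ = S ^ 2 * denD p m δ := by rw [hsq]; field_simp
  rw [hA']
  field_simp
  ring

lemma exists_gfun_eq {p m q y : ℝ} (hp : 4 ≤ p) (hm : 1 ≤ m) (hmp : m ^ 2 + 1 ≤ p)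
    (hq : 0 ≤ q) (hy0 : -(p + 2 * m - 4) < y) (hyq : y ≤ q) : ∃ δ, 0 < δ ∧ gfun p m δ = y := by
  have h0 : gfun p m 0 = -(p + 2 * m - 4) := by
    simp [gfun, numA, denD]
  -- at this point `A / D ≥ 1 / 4`, while the linear factor exceeds `2 q`
  have hδ : 0 ≤ 6 * m + 4 + q := by linarith
  have h1 : q ≤ gfun p m (6 * m + 4 + q) := by
    have hD := denD_pos hp hm hmp (6 * m + 4 + q)
    have hs : 1 / 2 ≤ √(numA p m (6 * m + 4 + q) / denD p m (6 * m + 4 + q)) := by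
      apply Real.le_sqrt_of_sq_le
      rw [le_div_iff₀ hD]
      have : 0 ≤ (6 * m + 4 + q) * ((3 * p - 8) * (6 * m + 4 + q) - (6 * m + 4)) :=
        mul_nonneg hδ (by nlinarith)
      unfold numA denD
      nlinarith
    have hl : 2 * q ≤ p * (6 * m + 4 + q) - (p + 2 * m - 4) := by nlinarith
    unfold gfun
    nlinarith
  obtain ⟨δ, hδm, hδy⟩ := intermediate_value_Icc hδ
    (gfun_continuous hp hm hmp).continuousOn (show y ∈ Set.Icc _ _ from
      ⟨by rw [h0]; exact hy0.le, hyq.trans h1⟩)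
  refine ⟨δ, lt_of_le_of_ne hδm.1 ?_, hδy⟩
  rintro rfl
  rw [h0] at hδy
  exact hy0.ne hδy

/-- The Einstein equations say that the three scaled Ricci eigenvalues `R₁, R₂, R₃` agree. -/
lemma einstein_eqs_iff {k l m M : ℝ} (hk : 0 < k) (hl : 0 < l) (hm : 0 < m) (hM : 0 < M)
    (x y z : ℝ) :
    ((l / M + m / M) * (k / M * y ^ 2 + k / M * z ^ 2 - y * z) + (l / M * y + m / M * z) * x
      - (k / M * (l / M) + k / M * (m / M) + 2 * (l / M) * (m / M)) * x ^ 2 = 0 ∧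
    (k / M + m / M) * (l / M * x ^ 2 + l / M * z ^ 2 - x * z) + (k / M * x + m / M * z) * y
      - (k / M * (l / M) + 2 * (k / M) * (m / M) + l / M * (m / M)) * y ^ 2 = 0) ↔
    (M * (y * z) + k * (x ^ 2 - y ^ 2 - z ^ 2) = M * (x * z) + l * (y ^ 2 - x ^ 2 - z ^ 2) ∧
     M * (y * z) + k * (x ^ 2 - y ^ 2 - z ^ 2) = M * (x * y) + m * (z ^ 2 - x ^ 2 - y ^ 2)) := by
  have hMne := hM.ne'
  set R1 := M * (y * z) + k * (x ^ 2 - y ^ 2 - z ^ 2) with hR1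
  set R2 := M * (x * z) + l * (y ^ 2 - x ^ 2 - z ^ 2) with hR2
  set R3 := M * (x * y) + m * (z ^ 2 - x ^ 2 - y ^ 2) with hR3
  have e1 : (l / M + m / M) * (k / M * y ^ 2 + k / M * z ^ 2 - y * z) + (l / M * y + m / M * z) * x
      - (k / M * (l / M) + k / M * (m / M) + 2 * (l / M) * (m / M)) * x ^ 2
      = (l * (R3 - R1) + m * (R2 - R1)) / M ^ 2 := by
    rw [hR1, hR2, hR3]; field_simp; ring
  have e2 : (k / M + m / M) * (l / M * x ^ 2 + l / M * z ^ 2 - x * z) + (k / M * x + m / M * z) * y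
      - (k / M * (l / M) + 2 * (k / M) * (m / M) + l / M * (m / M)) * y ^ 2
      = (k * (R3 - R2) + m * (R1 - R2)) / M ^ 2 := by
    rw [hR1, hR2, hR3]; field_simp; ring
  rw [e1, e2]
  have hM2 : M ^ 2 ≠ 0 := by positivity
  rw [div_eq_zero_iff, div_eq_zero_iff, or_iff_left hM2, or_iff_left hM2]
  have hdet : k * l + k * m + l * m ≠ 0 := by positivity
  constructor
  · rintro ⟨h1, h2⟩
    constructor
    · apply mul_left_cancel₀ hdet
      linear_combination -k * h1 + l * h2
    · apply mul_left_cancel₀ hdet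
      linear_combination -(k + m) * h1 - m * h2
  · rintro ⟨h1, h2⟩
    constructor
    · linear_combination -l * h2 - m * h1
    · linear_combination k * (h1 - h2) + m * h1

/-- The Einstein equations in the coordinates `δ = (x₁ + x₂)/x₃ - 1` and `u = (x₁ - x₂)/x₃`. -/
lemma isEinstein_iff {k l m : ℝ} (hk : 0 < k) (hl : 0 < l) (hm : 1 ≤ m) (hp : 4 ≤ k + l)
    (hmp : m ^ 2 + 1 ≤ k + l) {δ u t : ℝ} (ht : 0 < t) (hv : 0 < 1 + δ) :
    isEinstein (k / (2 * (k + l + m - 2))) (l / (2 * (k + l + m - 2))) (m / (2 * (k + l + m - 2)))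
      ((1 + δ + u) / 2 * t) ((1 + δ - u) / 2 * t) t ↔
    0 < δ ∧ u * ((k + l) * δ - (k + l + 2 * m - 4)) = k - l ∧
      u ^ 2 * denD (k + l) m δ = numA (k + l) m δ := by
  have hD := denD_pos hp hm hmp δ
  unfold isEinstein
  rw [einstein_eqs_iff hk hl (by linarith) (by linarith)]
  have hpos : u ^ 2 * denD (k + l) m δ = numA (k + l) m δ → (0 < δ ↔ u ^ 2 < (1 + δ) ^ 2) := by
    intro h
    have hid : ((1 + δ) ^ 2 - u ^ 2) * denD (k + l) m δ
        = δ * ((2 + δ) * ((k + l) * (1 + δ) ^ 2 - 2 * (k + l + m - 2) * (1 + δ)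
          + (k + l + 2 * m))) := by
      rw [sub_mul, h]; unfold numA denD; ring
    have hW : 0 < (k + l) * (1 + δ) ^ 2 - 2 * (k + l + m - 2) * (1 + δ) + (k + l + 2 * m) := by
      have : 0 < (k + l) * ((k + l) * (1 + δ) ^ 2 - 2 * (k + l + m - 2) * (1 + δ)
          + (k + l + 2 * m)) := by
        nlinarith [sq_nonneg ((k + l) * (1 + δ) - (k + l + m - 2))]
      exact pos_of_mul_pos_right this (by linarith)
    have hW2 := mul_pos (by linarith : 0 < 2 + δ) hW
    have hsign : 0 < ((1 + δ) ^ 2 - u ^ 2) * denD (k + l) m δ ↔ 0 < (1 + δ) ^ 2 - u ^ 2 :=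
      mul_pos_iff_of_pos_right hD
    rw [hid, mul_pos_iff_of_pos_right hW2] at hsign
    rw [hsign, sub_pos]
  have ht2 : t ^ 2 ≠ 0 := by positivity
  constructor
  · rintro ⟨h1, h2, -, e1, e2⟩
    have h1' : 0 < 1 + δ + u := by
      have := pos_of_mul_pos_left h1 ht.le
      linarith
    have h2' : 0 < 1 + δ - u := by
      have := pos_of_mul_pos_left h2 ht.le
      linarith
    have f1 : u * ((k + l) * δ - (k + l + 2 * m - 4)) = k - l := by
      apply mul_left_cancel₀ ht2
      linear_combination e1
    have f2 : u ^ 2 * denD (k + l) m δ = numA (k + l) m δ := by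
      apply mul_left_cancel₀ ht2
      unfold denD numA
      linear_combination 2 * e2 - e1 + t ^ 2 * u * (1 + δ) * f1
    exact ⟨(hpos f2).2 (by nlinarith), f1, f2⟩
  · rintro ⟨h0, f1, f2⟩
    obtain ⟨h1, h2⟩ := abs_lt_of_sq_lt_sq' ((hpos f2).1 h0) hv.le
    unfold denD numA at f2
    refine ⟨by apply mul_pos _ ht; linarith, by apply mul_pos _ ht; linarith, ht, ?_, ?_⟩
    · linear_combination t ^ 2 * f1
    · linear_combination t ^ 2 / 2 * (f2 + f1 - u * (1 + δ) * f1)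

/-- The normalized metric with `(x₁ + x₂)/x₃ = 1 + δ` and `(x₁ - x₂)/x₃ = u`. -/
def metricPt (δ u : ℝ) : ℝ × ℝ × ℝ :=
  ((1 + δ + u) / 2 * (1 / (2 + δ)), (1 + δ - u) / 2 * (1 / (2 + δ)), 1 / (2 + δ))

theorem stmt1 (k l m : ℕ) (hkl : l ≤ k) (hlm : m ≤ l) (hm : 1 ≤ m) (hl : 2 ≤ l)
    (hsqrt : (m : ℝ) < Real.sqrt ((k : ℝ) + l)) :
    (normalizedEinstein ((k : ℝ) / (2 * ((k : ℝ) + l + m - 2))) ((l : ℝ) / (2 * ((k : ℝ) + l + m - 2))) ((m : ℝ) / (2 * ((k : ℝ) + l + m - 2)))).ncard = 2 := by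
  have hmpN : m ^ 2 + 1 ≤ k + l := by
    have h := (Real.lt_sqrt (by positivity)).1 hsqrt
    have : m ^ 2 < k + l := by exact_mod_cast h
    omega
  have hm3N : m = 1 ∨ m = 2 ∨ 3 ≤ m := by omega
  have hmp : (m : ℝ) ^ 2 + 1 ≤ k + l := by exact_mod_cast hmpN
  have hm3 : (m : ℝ) = 1 ∨ (m : ℝ) = 2 ∨ (3 : ℝ) ≤ m := by exact_mod_cast hm3N
  have hkl' : (l : ℝ) ≤ k := by exact_mod_cast hkl
  have hm' : (1 : ℝ) ≤ m := by exact_mod_cast hm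
  have hl' : (2 : ℝ) ≤ l := by exact_mod_cast hl
  clear hsqrt hmpN hm3N hkl hlm hm hl
  generalize (k : ℝ) = k at *
  generalize (l : ℝ) = l at *
  generalize (m : ℝ) = m at *
  have hp : 4 ≤ k + l := by linarith
  have hmono := gfun_strictMonoOn hp hm3 hmp
  obtain ⟨δ₁, hδ₁, hg₁⟩ := exists_gfun_eq (y := k - l) hp hm' hmp
    (sub_nonneg.2 hkl') (by linarith) le_rfl
  obtain ⟨δ₂, hδ₂, hg₂⟩ := exists_gfun_eq (y := -(k - l)) hp hm' hmp
    (sub_nonneg.2 hkl') (by linarith) (by linarith)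
  have hR : ∀ δ, 0 < numA (k + l) m δ / denD (k + l) m δ := fun δ =>
    div_pos (numA_pos hp hmp δ) (denD_pos hp hm' hmp δ)
  have hsq : ∀ δ, √(numA (k + l) m δ / denD (k + l) m δ) ^ 2 * denD (k + l) m δ
      = numA (k + l) m δ := fun δ => by
    rw [Real.sq_sqrt (hR δ).le, div_mul_cancel₀ _ (denD_pos hp hm' hmp δ).ne']
  have hmem : ∀ δ u, 0 < δ → u * ((k + l) * δ - (k + l + 2 * m - 4)) = k - l →
      u ^ 2 * denD (k + l) m δ = numA (k + l) m δ →
      metricPt δ u ∈ normalizedEinstein (k / (2 * (k + l + m - 2))) (l / (2 * (k + l + m - 2)))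
        (m / (2 * (k + l + m - 2))) := by
    intro δ u h0 h1 h2
    have h2δ : 2 + δ ≠ 0 := by positivity
    refine ⟨(isEinstein_iff (by linarith) (by linarith) hm' hp hmp (by positivity)
      (by linarith)).2 ⟨h0, h1, h2⟩, ?_⟩
    simp only [metricPt]
    field_simp
    ring
  rw [Set.ncard_eq_two]
  refine ⟨metricPt δ₁ (√(numA (k + l) m δ₁ / denD (k + l) m δ₁)),
    metricPt δ₂ (-√(numA (k + l) m δ₂ / denD (k + l) m δ₂)), ?_, ?_⟩
  · -- the two metrics differ in the sign of `x₁ - x₂`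
    intro h
    have hs₁ := Real.sqrt_pos.2 (hR δ₁)
    have hs₂ := Real.sqrt_pos.2 (hR δ₂)
    generalize √(numA (k + l) m δ₁ / denD (k + l) m δ₁) = S₁ at *
    generalize √(numA (k + l) m δ₂ / denD (k + l) m δ₂) = S₂ at *
    simp only [metricPt, Prod.mk.injEq] at h
    obtain ⟨e1, e2, -⟩ := h
    have h1 : 0 < S₁ * (1 / (2 + δ₁)) := by positivity
    have h2 : 0 < S₂ * (1 / (2 + δ₂)) := by positivity
    linarith
  · apply Set.Subset.antisymm
    · rintro ⟨x, y, z⟩ ⟨hE, hsum⟩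
      have hE0 := hE
      obtain ⟨hx, hy, hz, -, -⟩ := hE0
      simp only at hx hy hz hsum
      obtain ⟨δ, hδ⟩ : ∃ δ, δ = (x + y) / z - 1 := ⟨_, rfl⟩
      obtain ⟨u, hu⟩ : ∃ u, u = (x - y) / z := ⟨_, rfl⟩
      have hv : 0 < 1 + δ := by rw [hδ]; ring_nf; positivity
      have hzδ : z = 1 / (2 + δ) := by
        have h2 : 2 + δ = 1 / z := by
          rw [hδ, eq_div_iff hz.ne']
          field_simp
          linarith
        rw [h2, one_div_one_div]
      have hx' : x = (1 + δ + u) / 2 * z := by rw [hδ, hu]; field_simp; ring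
      have hy' : y = (1 + δ - u) / 2 * z := by rw [hδ, hu]; field_simp; ring
      have hpt : (x, y, z) = metricPt δ u := by
        simp only [metricPt, ← hzδ, ← hx', ← hy']
      simp only at hE
      rw [hx', hy', isEinstein_iff (by linarith) (by linarith) hm' hp hmp hz hv] at hE
      obtain ⟨h0, f1, f2⟩ := hE
      have hu2 : u ^ 2 = √(numA (k + l) m δ / denD (k + l) m δ) ^ 2 :=
        mul_right_cancel₀ (denD_pos hp hm' hmp δ).ne' (f2.trans (hsq δ).symm)
      rw [hpt]
      rcases sq_eq_sq_iff_eq_or_eq_neg.1 hu2 with h | h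
      · left
        have hδe : δ = δ₁ := by
          apply hmono.injOn h0.le hδ₁.le
          rw [hg₁, ← f1, h, gfun, mul_comm]
        subst hδe
        rw [h]
      · right
        have hδe : δ = δ₂ := by
          apply hmono.injOn h0.le hδ₂.le
          rw [hg₂, ← f1, h, gfun]
          ring
        subst hδe
        rw [h]
        rfl
    · rintro _ (rfl | rfl)
      · exact hmem _ _ hδ₁ (by rw [← hg₁, gfun, mul_comm]) (hsq δ₁)
      · refine hmem _ _ hδ₂ ?_ (by rw [neg_sq]; exact hsq δ₂)
        rw [gfun] at hg₂
        linear_combination -hg₂
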